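/- arXiv:2506.10725 — 2 statements merged into one kernel-verified Lean document; each statement's English description precedes it below -/
import Mathlib

section
/- (Convex weight of the whole network.) Consider a line network with source states ρ_1, …, ρ_n (ρ_j a state on H_{A_j} ⊗ H_{B_j}) and POVMs M^j = {M^j_{b_j}} on H_{B_j} ⊗ H_{A_{j+1}} for j = 1, …, n−1, with subnormalized endpoint states σ_{b⃗} on H_{A_1} ⊗ H_{B_n} given by the partial trace over all middle systems of (1 ⊗ M^1_{b_1} ⊗ ⋯ ⊗ M^{n−1}_{b_{n−1}} ⊗ 1)(ρ_1 ⊗ ⋯ ⊗ ρ_n). Let W_SEP(ρ_j) be the convex weight of ρ_j with respect to separable states and W_SEP(M^j) the convex weight of M^j with respect to separable POVMs. Then Σ_{b⃗ : tr σ_{b⃗} > 0} tr(σ_{b⃗}) · W_SEP(σ_{b⃗}/tr σ_{b⃗}) ≤ (∏_{j=1}^{n−1} W_SEP(M^j)) · (∏_{j=1}^{n} W_SEP(ρ_j)), where the convex weight of the endpoint states is taken with respect to separable states on H_{A_1} ⊗ H_{B_n}. -/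
/-!
Choose for every measurement a decomposition `M j = (1 - v j) P j + v j N j` with `P j` a separable
POVM, and for every source a decomposition `ρ i = (1 - w i) τ i + w i η i` with `τ i` separable.
The endpoint operator is multilinear in the measurements and the sources, so it expands into the
term built from all the `N j` and `η i`, with coefficient `∏ v j * ∏ w i`, and terms in which at
least one device is separable. A device that is a product operator cuts the line, so each of these
other terms is an unnormalized separable operator (`exists_sepCone_add`). Hence
`tr σ_b * W_SEP(σ_b / tr σ_b)` is at most `∏ v j * ∏ w i` times the trace of the endpoint operator
of the network `(N, η)` (`trace_mul_weight_le`). These traces sum to one over all outcomes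
(`sum_trace_compress_lineMatrix`), and letting the `v j` and `w i` tend to the infima proves the
claim.

The computations rest on a closed form of the endpoint operator (`netEndpoint_eq`): it is obtained
by summing, over global indices with prescribed endpoint labels, the entrywise product of the
sources and the transposed measurements, all lifted to global indices. Positivity then follows from
the Schur product theorem, and cutting the line is a factorization of the index set.
-/

open scoped Kronecker ComplexOrder

noncomputable section

/-- A quantum state: positive semidefinite matrix with unit trace. -/
def IsState {n : Type*} [Fintype n] (ρ : Matrix n n ℂ) : Prop :=
  ρ.PosSemidef ∧ ρ.trace = 1

/-- A POVM: a finite family of positive semidefinite matrices summing to the identity. -/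
def IsPOVM {d ι : Type*} [Fintype d] [Fintype ι] [DecidableEq d]
    (M : ι → Matrix d d ℂ) : Prop :=
  (∀ i, (M i).PosSemidef) ∧ (∑ i, M i) = 1

/-- A separable bipartite state: a finite convex combination of product states. -/
def IsSepState {A B : Type*} [Fintype A] [Fintype B]
    (σ : Matrix (A × B) (A × B) ℂ) : Prop :=
  ∃ (m : ℕ) (p : Fin m → ℝ) (α : Fin m → Matrix A A ℂ) (β : Fin m → Matrix B B ℂ),
    (∀ l, 0 ≤ p l) ∧ (∑ l, p l = 1) ∧ (∀ l, IsState (α l)) ∧ (∀ l, IsState (β l)) ∧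
    σ = ∑ l, p l • (α l ⊗ₖ β l)

/-- A separable POVM: each element is a sum of products of positive semidefinite operators. -/
def IsSepPOVM {A B ι : Type*} [Fintype A] [Fintype B] [Fintype ι]
    [DecidableEq A] [DecidableEq B]
    (M : ι → Matrix (A × B) (A × B) ℂ) : Prop :=
  IsPOVM M ∧ ∀ i, ∃ (m : ℕ) (P : Fin m → Matrix A A ℂ) (Q : Fin m → Matrix B B ℂ),
    (∀ a, (P a).PosSemidef) ∧ (∀ a, (Q a).PosSemidef) ∧ M i = ∑ a, P a ⊗ₖ Q a

/-- The convex weight of a state `σ` with respect to a free set `F`. -/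
def weight {n : Type*} [Fintype n] (F : Set (Matrix n n ℂ)) (σ : Matrix n n ℂ) : ℝ :=
  sInf { w : ℝ | 0 ≤ w ∧ ∃ τ ∈ F, ∃ η, IsState η ∧ σ = (1 - w) • τ + w • η }

/-- The convex weight of a POVM `M` with respect to a free set of POVMs. -/
def povmWeight {d ι : Type*} [Fintype d] [Fintype ι] [DecidableEq d]
    (Free : Set (ι → Matrix d d ℂ)) (M : ι → Matrix d d ℂ) : ℝ :=
  sInf { w : ℝ | 0 ≤ w ∧ ∃ P ∈ Free, ∃ Nn, IsPOVM Nn ∧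
    ∀ i, M i = (1 - w) • P i + w • Nn i }

section Network

variable {n : ℕ} {A B : Fin (n + 1) → Type*}

/-- The global operator `1_{A_1} ⊗ M^1_{b_1} ⊗ ⋯ ⊗ M^{n}_{b_n} ⊗ 1_{B_{n+1}}` of a line
network, with tensor factors reordered to the grouping `⊗_i (A_i ⊗ B_i)`. -/
def netGlobalMeas [∀ i, Fintype (A i)] [∀ i, Fintype (B i)]
    [∀ i, DecidableEq (A i)] [∀ i, DecidableEq (B i)]
    (Mβ : ∀ j : Fin n, Matrix (B j.castSucc × A j.succ) (B j.castSucc × A j.succ) ℂ) :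
    Matrix (∀ i, A i × B i) (∀ i, A i × B i) ℂ :=
  Matrix.of fun x y =>
    (if (x 0).1 = (y 0).1 then (1 : ℂ) else 0) *
      (if (x (Fin.last n)).2 = (y (Fin.last n)).2 then (1 : ℂ) else 0) *
      ∏ j : Fin n, Mβ j ((x j.castSucc).2, (x j.succ).1) ((y j.castSucc).2, (y j.succ).1)

/-- The global source operator `X_1 ⊗ ⋯ ⊗ X_{n+1}` of a line network. -/
def netGlobalState (X : ∀ i, Matrix (A i × B i) (A i × B i) ℂ) :
    Matrix (∀ i, A i × B i) (∀ i, A i × B i) ℂ :=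
  Matrix.of fun x y => ∏ i, X i (x i) (y i)

/-- The (subnormalized) endpoint operator of a line network: the partial trace over all
middle systems of `(1 ⊗ M^1_{b_1} ⊗ ⋯ ⊗ M^n_{b_n} ⊗ 1)(X_1 ⊗ ⋯ ⊗ X_{n+1})`. -/
def netEndpoint [∀ i, Fintype (A i)] [∀ i, Fintype (B i)]
    [∀ i, DecidableEq (A i)] [∀ i, DecidableEq (B i)]
    (Mβ : ∀ j : Fin n, Matrix (B j.castSucc × A j.succ) (B j.castSucc × A j.succ) ℂ)
    (X : ∀ i, Matrix (A i × B i) (A i × B i) ℂ) :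
    Matrix (A 0 × B (Fin.last n)) (A 0 × B (Fin.last n)) ℂ :=
  Matrix.of fun s t =>
    ∑ x : ∀ i, A i × B i, ∑ y : ∀ i, A i × B i,
      if (x 0).1 = s.1 ∧ (x (Fin.last n)).2 = s.2 ∧ (y 0).1 = t.1 ∧
          (y (Fin.last n)).2 = t.2 ∧ (∀ i, i ≠ 0 → (x i).1 = (y i).1) ∧
          (∀ i, i ≠ Fin.last n → (x i).2 = (y i).2)
      then (netGlobalMeas Mβ * netGlobalState X) x y else 0

end Network

/-! ### The cone of separable operators -/

/-- The cone of unnormalized separable operators: finite sums of products `P ⊗ Q` of positive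
semidefinite matrices. -/
def sepCone (A B : Type*) : AddSubmonoid (Matrix (A × B) (A × B) ℂ) :=
  AddSubmonoid.closure {σ | ∃ (P : Matrix A A ℂ) (Q : Matrix B B ℂ),
    P.PosSemidef ∧ Q.PosSemidef ∧ σ = P ⊗ₖ Q}

section Cone

variable {A B : Type*}

lemma kronecker_mem_sepCone {P : Matrix A A ℂ} {Q : Matrix B B ℂ}
    (hP : P.PosSemidef) (hQ : Q.PosSemidef) : P ⊗ₖ Q ∈ sepCone A B :=
  AddSubmonoid.subset_closure ⟨P, Q, hP, hQ, rfl⟩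

lemma smul_mem_sepCone {c : ℝ} (hc : 0 ≤ c) {σ : Matrix (A × B) (A × B) ℂ}
    (hσ : σ ∈ sepCone A B) : c • σ ∈ sepCone A B := by
  induction hσ using AddSubmonoid.closure_induction with
  | mem x hx =>
    obtain ⟨P, Q, hP, hQ, rfl⟩ := hx
    rw [← Matrix.smul_kronecker]
    exact kronecker_mem_sepCone (hP.smul hc) hQ
  | zero => rw [smul_zero]; exact zero_mem _
  | add x y _ _ hx hy => rw [smul_add]; exact add_mem hx hy

variable [Fintype A] [Fintype B]

lemma posSemidef_of_mem_sepCone {σ : Matrix (A × B) (A × B) ℂ}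
    (hσ : σ ∈ sepCone A B) : σ.PosSemidef := by
  classical
  induction hσ using AddSubmonoid.closure_induction with
  | mem x hx =>
    obtain ⟨P, Q, hP, hQ, rfl⟩ := hx
    exact hP.kronecker hQ
  | zero => exact Matrix.PosSemidef.zero
  | add x y _ _ hx hy => exact hx.add hy

lemma IsSepState.mem_sepCone {σ : Matrix (A × B) (A × B) ℂ} (h : IsSepState σ) :
    σ ∈ sepCone A B := by
  obtain ⟨m, p, α, β, hp, -, hα, hβ, rfl⟩ := h
  exact sum_mem fun l _ => smul_mem_sepCone (hp l) (kronecker_mem_sepCone (hα l).1 (hβ l).1)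

lemma IsSepState.trace_eq {σ : Matrix (A × B) (A × B) ℂ} (h : IsSepState σ) : σ.trace = 1 := by
  obtain ⟨m, p, α, β, -, h1, hα, hβ, rfl⟩ := h
  simp only [Matrix.trace_sum, Matrix.trace_smul, Matrix.trace_kronecker, (hα _).2, (hβ _).2]
  simpa using congrArg (fun r : ℝ => (r : ℂ)) h1

lemma IsSepState.of_kronecker {α : Matrix A A ℂ} {β : Matrix B B ℂ} (hα : IsState α)
    (hβ : IsState β) : IsSepState (α ⊗ₖ β) :=
  ⟨1, fun _ => 1, fun _ => α, fun _ => β, by simp, by simp, fun _ => hα, fun _ => hβ, by simp⟩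

lemma IsSepState.convex {σ τ : Matrix (A × B) (A × B) ℂ} (hσ : IsSepState σ) (hτ : IsSepState τ)
    {a b : ℝ} (ha : 0 ≤ a) (hb : 0 ≤ b) (hab : a + b = 1) : IsSepState (a • σ + b • τ) := by
  obtain ⟨m, p, α, β, hp, hp1, hα, hβ, rfl⟩ := hσ
  obtain ⟨m', p', α', β', hp', hp1', hα', hβ', rfl⟩ := hτ
  refine ⟨m + m', Fin.append (fun l => a * p l) (fun l => b * p' l), Fin.append α α',
    Fin.append β β', ?_, ?_, ?_, ?_, ?_⟩
  · intro l
    refine Fin.addCases (fun i => ?_) (fun i => ?_) l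
    · simpa using mul_nonneg ha (hp i)
    · simpa using mul_nonneg hb (hp' i)
  · simp [Fin.sum_univ_add, ← Finset.mul_sum, hp1, hp1', hab]
  · intro l
    refine Fin.addCases (fun i => ?_) (fun i => ?_) l
    · simpa using hα i
    · simpa using hα' i
  · intro l
    refine Fin.addCases (fun i => ?_) (fun i => ?_) l
    · simpa using hβ i
    · simpa using hβ' i
  · simp [Fin.sum_univ_add, Finset.smul_sum, mul_smul]

lemma exists_isState {K : Type*} [Fintype K] [Nonempty K] :
    ∃ η : Matrix K K ℂ, IsState η := by
  classical
  obtain ⟨k⟩ := ‹Nonempty K›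
  refine ⟨Matrix.diagonal (Pi.single k 1), Matrix.PosSemidef.diagonal ?_, ?_⟩
  · exact Pi.single_nonneg.2 zero_le_one
  · simp [Matrix.trace_diagonal]

lemma exists_smul_isState {K : Type*} [Fintype K] [Nonempty K] {R : Matrix K K ℂ}
    (hR : R.PosSemidef) : ∃ c : ℝ, 0 ≤ c ∧ ∃ η, IsState η ∧ R = c • η := by
  classical
  by_cases h0 : R.trace = 0
  · obtain ⟨η, hη⟩ := exists_isState (K := K)
    exact ⟨0, le_rfl, η, hη, by simpa using hR.trace_eq_zero_iff.1 h0⟩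
  · obtain ⟨hre, him⟩ := Complex.nonneg_iff.1 hR.trace_nonneg
    have hc : R.trace = ((R.trace.re : ℝ) : ℂ) := Complex.ext rfl (by simp [← him])
    have hne : R.trace.re ≠ 0 := fun h => h0 (by rw [hc, h]; simp)
    refine ⟨R.trace.re, hre, R.trace.re⁻¹ • R, ⟨hR.smul (inv_nonneg.2 hre), ?_⟩, ?_⟩
    · rw [Matrix.trace_smul, hc]
      simp [hne]
    · rw [smul_smul, mul_inv_cancel₀ hne, one_smul]

lemma exists_smul_isSepState [Nonempty A] [Nonempty B] {σ : Matrix (A × B) (A × B) ℂ}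
    (hσ : σ ∈ sepCone A B) : ∃ c : ℝ, 0 ≤ c ∧ ∃ τ, IsSepState τ ∧ σ = c • τ := by
  obtain ⟨α₀, hα₀⟩ := exists_isState (K := A)
  obtain ⟨β₀, hβ₀⟩ := exists_isState (K := B)
  induction hσ using AddSubmonoid.closure_induction with
  | mem x hx =>
    obtain ⟨P, Q, hP, hQ, rfl⟩ := hx
    obtain ⟨c, hc, α, hα, rfl⟩ := exists_smul_isState hP
    obtain ⟨d, hd, β, hβ, rfl⟩ := exists_smul_isState hQ
    exact ⟨c * d, mul_nonneg hc hd, α ⊗ₖ β, .of_kronecker hα hβ, by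
      rw [Matrix.smul_kronecker, Matrix.kronecker_smul, smul_smul]⟩
  | zero => exact ⟨0, le_rfl, _, .of_kronecker hα₀ hβ₀, by simp⟩
  | add x y _ _ hx hy =>
    obtain ⟨c, hc, σ, hσ, rfl⟩ := hx
    obtain ⟨d, hd, τ, hτ, rfl⟩ := hy
    rcases (add_nonneg hc hd).eq_or_lt with h | h
    · obtain rfl : c = 0 := by linarith
      obtain rfl : d = 0 := by linarith
      exact ⟨0, le_rfl, σ, hσ, by simp⟩
    · refine ⟨c + d, h.le, (c / (c + d)) • σ + (d / (c + d)) • τ,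
        hσ.convex hτ (by positivity) (by positivity) (by field_simp), ?_⟩
      rw [smul_add, smul_smul, smul_smul, mul_div_cancel₀ _ (ne_of_gt h),
        mul_div_cancel₀ _ (ne_of_gt h)]

/-- A decomposition `σ = S + W • R` into a separable part and a positive remainder bounds the
convex weight of the normalization of `σ`. -/
lemma trace_mul_weight_le [Nonempty A] [Nonempty B] {S R : Matrix (A × B) (A × B) ℂ} {W : ℝ}
    (hW : 0 ≤ W) (hS : S ∈ sepCone A B) (hR : R.PosSemidef) {σ : Matrix (A × B) (A × B) ℂ}
    (hσ : σ = S + W • R) (ht : 0 < σ.trace.re) :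
    σ.trace.re * weight { σ : Matrix (A × B) (A × B) ℂ | IsSepState σ } (σ.trace.re⁻¹ • σ)
      ≤ W * R.trace.re := by
  obtain ⟨c, hc, τ, hτ, rfl⟩ := exists_smul_isSepState hS
  obtain ⟨d, hd, η, hη, rfl⟩ := exists_smul_isState hR
  have htr : σ.trace.re = c + W * d := by
    rw [hσ]; simp [hτ.trace_eq, hη.2]
  have hRt : (d • η).trace.re = d := by simp [hη.2]
  rw [hRt]
  generalize σ.trace.re = t at *
  have hle : weight { σ : Matrix (A × B) (A × B) ℂ | IsSepState σ } (t⁻¹ • σ) ≤ W * d / t := by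
    refine csInf_le ⟨0, fun w hw => hw.1⟩ ⟨by positivity, τ, hτ, η, hη, ?_⟩
    have h1 : 1 - W * d / t = t⁻¹ * c := by field_simp; linarith
    rw [h1, hσ, smul_add, smul_smul, smul_smul, smul_smul]
    congr 2
    field_simp
  calc _ ≤ t * (W * d / t) := mul_le_mul_of_nonneg_left hle ht.le
    _ = W * d := by field_simp

end Cone

/-! ### Compression of a matrix along a map of index types -/

/-- The compression of `H` along `f`: the entries of `H` are summed over the fibres of `f`. -/
def compress {Y K : Type*} [Fintype Y] [DecidableEq K] (f : Y → K) (H : Matrix Y Y ℂ) :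
    Matrix K K ℂ :=
  Matrix.of fun s t => ∑ x, ∑ y, if f x = s ∧ f y = t then H x y else 0

lemma posSemidef_compress {Y K : Type*} [Fintype Y] [Fintype K] [DecidableEq K] (f : Y → K)
    {H : Matrix Y Y ℂ} (hH : H.PosSemidef) : (compress f H).PosSemidef := by
  have h := hH.conjTranspose_mul_mul_same (Matrix.of fun x k => if f x = k then (1 : ℂ) else 0)
  convert h using 1
  ext s t
  simp only [compress, Matrix.of_apply, Matrix.mul_apply, Matrix.conjTranspose_apply,
    Finset.sum_mul, ite_and]
  rw [Finset.sum_comm]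
  refine Finset.sum_congr rfl fun y _ => Finset.sum_congr rfl fun x _ => ?_
  split_ifs <;> simp

/-- If `(x, x') ↦ (mix x x', mix x' x)` is an involution, `F` sees only the first argument of
`mix` and `G` only the second, then `∑ F G` factorizes up to the cardinality of `Y`. Taking `mix`
to combine the left half of `x` with the right half of `x'`, this is Fubini for a product index
set that need not be written as a product. -/
lemma card_mul_sum_mul {Y : Type*} [Fintype Y] (mix : Y → Y → Y)
    (hmix : ∀ x x', mix (mix x x') (mix x' x) = x) (F G : Y → ℂ)
    (hF : ∀ x x', F (mix x x') = F x) (hG : ∀ x x', G (mix x x') = G x') :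
    (Fintype.card Y : ℂ) * ∑ x, F x * G x = (∑ x, F x) * ∑ x, G x := by
  let e : Y × Y ≃ Y × Y :=
    { toFun := fun z => (mix z.1 z.2, mix z.2 z.1)
      invFun := fun z => (mix z.1 z.2, mix z.2 z.1)
      left_inv := fun z => Prod.ext (hmix _ _) (hmix _ _)
      right_inv := fun z => Prod.ext (hmix _ _) (hmix _ _) }
  rw [Finset.sum_mul_sum, ← Fintype.sum_prod_type']
  calc (Fintype.card Y : ℂ) * ∑ x, F x * G x
      = ∑ z : Y × Y, F z.1 * G z.1 := by
        rw [Fintype.sum_prod_type_right]; simp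
    _ = ∑ z : Y × Y, F (e z).1 * G (e z).1 := (e.sum_comp fun z => F z.1 * G z.1).symm
    _ = _ := Finset.sum_congr rfl fun z _ => by
        change F (mix _ _) * G (mix _ _) = _
        rw [hF, hG]

/-- If the index set splits into two halves so that `L` and `f` see only the left one and `R` and
`g` only the right one, the compression of the entrywise product of `L` and `R` along `(f, g)` is,
up to a positive factor, the Kronecker product of the two compressions. -/
lemma compress_hadamard_mem_sepCone {Y A B : Type*} [Fintype Y] [Fintype A] [Fintype B]
    [DecidableEq A] [DecidableEq B] (mix : Y → Y → Y)
    (hmix : ∀ x x', mix (mix x x') (mix x' x) = x) (f : Y → A) (g : Y → B)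
    (hf : ∀ x x', f (mix x x') = f x) (hg : ∀ x x', g (mix x x') = g x')
    {L R : Matrix Y Y ℂ} (hLp : L.PosSemidef) (hRp : R.PosSemidef)
    (hL : ∀ x x' y y', L (mix x x') (mix y y') = L x y)
    (hR : ∀ x x' y y', R (mix x x') (mix y y') = R x' y') :
    compress (fun x => (f x, g x)) (Matrix.of fun x y => L x y * R x y) ∈ sepCone A B := by
  rcases isEmpty_or_nonempty Y with hY | hY
  · convert zero_mem (sepCone A B) using 1
    ext s t
    simp [compress]
  have key : ((Fintype.card (Y × Y) : ℕ) : ℝ) •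
      compress (fun x => (f x, g x)) (Matrix.of fun x y => L x y * R x y)
      = compress f L ⊗ₖ compress g R := by
    ext s t
    have := card_mul_sum_mul (fun z z' : Y × Y => (mix z.1 z'.1, mix z.2 z'.2))
      (fun z z' => Prod.ext (hmix _ _) (hmix _ _))
      (fun z => if f z.1 = s.1 ∧ f z.2 = t.1 then L z.1 z.2 else 0)
      (fun z => if g z.1 = s.2 ∧ g z.2 = t.2 then R z.1 z.2 else 0)
      (fun z z' => by simp only [hf, hL]) (fun z z' => by simp only [hg, hR])
    rw [Fintype.sum_prod_type, Fintype.sum_prod_type, Fintype.sum_prod_type] at this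
    simp only [Matrix.kroneckerMap_apply, compress, Matrix.of_apply, Matrix.smul_apply]
    rw [← this, Complex.real_smul, Complex.ofReal_natCast]
    congr 1
    refine Finset.sum_congr rfl fun x _ => Finset.sum_congr rfl fun y _ => ?_
    simp only [Prod.ext_iff]
    split_ifs <;> first | (exfalso; tauto) | simp
  have hc : ((Fintype.card (Y × Y) : ℕ) : ℝ) ≠ 0 := Nat.cast_ne_zero.2 Fintype.card_ne_zero
  rw [← inv_smul_smul₀ hc (compress _ _), key]
  exact smul_mem_sepCone (inv_nonneg.2 (Nat.cast_nonneg _))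
    (kronecker_mem_sepCone (posSemidef_compress f hLp) (posSemidef_compress g hRp))

/-- Finite form of the Schur product theorem. -/
lemma posSemidef_prod {ι Y : Type*} [Fintype Y] (s : Finset ι) (H : ι → Matrix Y Y ℂ)
    (h : ∀ i ∈ s, (H i).PosSemidef) : (Matrix.of fun x y => ∏ i ∈ s, H i x y).PosSemidef := by
  classical
  induction s using Finset.induction_on with
  | empty =>
    have := Matrix.posSemidef_vecMulVec_self_star (fun _ : Y => (1 : ℂ))
    convert this using 1
    ext x y
    simp [Matrix.vecMulVec_apply]
  | insert a s ha ih =>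
    have := (h a (by simp)).hadamard (ih fun i hi => h i (by simp [hi]))
    have e : (Matrix.of fun x y => ∏ i ∈ insert a s, H i x y) =
        (H a).hadamard (Matrix.of fun x y => ∏ i ∈ s, H i x y) := by
      ext x y
      simp [Finset.prod_insert ha]
    rw [e]
    exact this

/-! ### Replacing the factors of a multiadditive map one at a time -/

/-- Expanding `Φ (S + N)` slot by slot: every term except `Φ N` has some slot filled by `S`. -/
lemma exists_mem_add_of_multiadditive {ι V : Type*} [Fintype ι] [DecidableEq ι] {E : ι → Type*}
    [∀ j, AddCommMonoid (E j)] [AddCommMonoid V] (Φ : (∀ j, E j) → V) (C : AddSubmonoid V)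
    (good : ∀ j, AddSubmonoid (E j))
    (hadd : ∀ (M : ∀ j, E j) k S T, Φ (Function.update M k (S + T)) =
      Φ (Function.update M k S) + Φ (Function.update M k T))
    (S N : ∀ j, E j) (hS : ∀ j, S j ∈ good j) (hN : ∀ j, N j ∈ good j)
    (hC : ∀ (M : ∀ j, E j) k, (∀ j, M j ∈ good j) → Φ (Function.update M k (S k)) ∈ C) :
    ∃ c ∈ C, Φ (fun j => S j + N j) = c + Φ N := by
  suffices h : ∀ T : Finset ι, ∃ c ∈ C,
      Φ (fun j => S j + N j) = c + Φ (T.piecewise N fun j => S j + N j) by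
    simpa using h Finset.univ
  intro T
  induction T using Finset.induction_on with
  | empty => exact ⟨0, zero_mem _, by simp⟩
  | insert k T hk ih =>
    obtain ⟨c, hc, h⟩ := ih
    set P := T.piecewise N fun j => S j + N j with hP
    have hgood : ∀ j, P j ∈ good j := fun j => by
      by_cases hj : j ∈ T
      · simpa [hP, hj] using hN j
      · simpa [hP, hj] using add_mem (hS j) (hN j)
    have hPk : P = Function.update P k (S k + N k) := by
      rw [eq_comm, Function.update_eq_self_iff]
      simp [hP, hk]
    refine ⟨c + Φ (Function.update P k (S k)), add_mem hc (hC P k hgood), ?_⟩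
    rw [Finset.piecewise_insert, ← hP, h, add_assoc, ← hadd, ← hPk]

lemma prod_update_apply {ι : Type*} [Fintype ι] [DecidableEq ι] {D : ι → Type*}
    (M : ∀ j, Matrix (D j) (D j) ℂ) (k : ι) (S : Matrix (D k) (D k) ℂ) (a b : ∀ j, D j) :
    ∏ j, Function.update M k S j (a j) (b j) =
      S (a k) (b k) * ∏ j ∈ Finset.univ.erase k, M j (a j) (b j) := by
  rw [← Finset.mul_prod_erase _ _ (Finset.mem_univ k), Function.update_self]
  congr 1
  exact Finset.prod_congr rfl fun j hj => by rw [Function.update_of_ne (Finset.ne_of_mem_erase hj)]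

/-! ### The endpoint operator of a line network -/

section Line

variable {n : ℕ} {A B : Fin (n + 1) → Type*}

/-- The two endpoint labels of a global index. -/
def ends (x : ∀ i, A i × B i) : A 0 × B (Fin.last n) := ((x 0).1, (x (Fin.last n)).2)

/-- The labels of a global index on which the `j`-th measurement acts. -/
def midLabel (x : ∀ i, A i × B i) (j : Fin n) : B j.castSucc × A j.succ :=
  ((x j.castSucc).2, (x j.succ).1)

/-- The entrywise product of the transposed measurement operators and the source operators,
each lifted to global indices. Its compression along `ends` is the endpoint operator. -/
def lineMatrix (M : ∀ j : Fin n, Matrix (B j.castSucc × A j.succ) (B j.castSucc × A j.succ) ℂ)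
    (X : ∀ i, Matrix (A i × B i) (A i × B i) ℂ) :
    Matrix (∀ i, A i × B i) (∀ i, A i × B i) ℂ :=
  Matrix.of fun x y => (∏ j, M j (midLabel y j) (midLabel x j)) * ∏ i, X i (x i) (y i)

/-- Takes the labels selected by `p` (on the `A` side) and `q` (on the `B` side) from `x` and the
others from `x'`. -/
def mix (p q : Fin (n + 1) → Prop) [DecidablePred p] [DecidablePred q]
    (x x' : ∀ i, A i × B i) : ∀ i, A i × B i :=
  fun i => (if p i then (x i).1 else (x' i).1, if q i then (x i).2 else (x' i).2)

lemma mix_mix (p q : Fin (n + 1) → Prop) [DecidablePred p] [DecidablePred q]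
    (x x' : ∀ i, A i × B i) : mix p q (mix p q x x') (mix p q x' x) = x := by
  funext i
  simp only [mix]
  ext <;> dsimp only <;> split_ifs <;> rfl

variable [∀ i, Fintype (A i)] [∀ i, Fintype (B i)]

lemma posSemidef_prod_meas
    {M : ∀ j : Fin n, Matrix (B j.castSucc × A j.succ) (B j.castSucc × A j.succ) ℂ}
    (hM : ∀ j, (M j).PosSemidef) (s : Finset (Fin n)) :
    (Matrix.of fun x y : ∀ i, A i × B i =>
      ∏ j ∈ s, M j (midLabel y j) (midLabel x j)).PosSemidef :=
  posSemidef_prod s (fun j => (M j).transpose.submatrix (fun x : ∀ i, A i × B i => midLabel x j)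
    (fun x => midLabel x j)) fun j _ => (hM j).transpose.submatrix _

lemma posSemidef_prod_source {X : ∀ i, Matrix (A i × B i) (A i × B i) ℂ}
    (hX : ∀ i, (X i).PosSemidef) (s : Finset (Fin (n + 1))) :
    (Matrix.of fun x y : ∀ i, A i × B i => ∏ i ∈ s, X i (x i) (y i)).PosSemidef :=
  posSemidef_prod s (fun i => (X i).submatrix (fun x : ∀ i, A i × B i => x i) (fun x => x i))
    fun i _ => (hX i).submatrix _

lemma posSemidef_lineMatrix
    {M : ∀ j : Fin n, Matrix (B j.castSucc × A j.succ) (B j.castSucc × A j.succ) ℂ}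
    {X : ∀ i, Matrix (A i × B i) (A i × B i) ℂ}
    (hM : ∀ j, (M j).PosSemidef) (hX : ∀ i, (X i).PosSemidef) :
    (lineMatrix M X).PosSemidef :=
  (posSemidef_prod_meas hM Finset.univ).hadamard (posSemidef_prod_source hX Finset.univ)

variable [∀ i, DecidableEq (A i)] [∀ i, DecidableEq (B i)]

/-- In the matrix product defining the endpoint operator, the row index is determined by the
remaining two: it has the endpoint labels of the summation index `z` and the middle labels of the
column index `y`. -/
lemma netEndpoint_eq
    (M : ∀ j : Fin n, Matrix (B j.castSucc × A j.succ) (B j.castSucc × A j.succ) ℂ)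
    (X : ∀ i, Matrix (A i × B i) (A i × B i) ℂ) :
    netEndpoint M X = compress ends (lineMatrix M X) := by
  ext s t
  have h1 : netEndpoint M X s t = ∑ z : ∀ i, A i × B i, ∑ y : ∀ i, A i × B i,
      ∑ x : ∀ i, A i × B i,
        if x = (fun i => (if i = 0 then (z i).1 else (y i).1,
            if i = Fin.last n then (z i).2 else (y i).2)) then
          (if ends z = s ∧ ends y = t then lineMatrix M X z y else 0) else 0 := by
    simp only [netEndpoint, Matrix.of_apply, Matrix.mul_apply]
    have : ∀ (P : Prop) [Decidable P] (f : (∀ i, A i × B i) → ℂ),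
        (if P then ∑ z, f z else 0) = ∑ z, if P then f z else 0 := by
      intro P _ f; split_ifs <;> simp
    simp only [this]
    rw [Finset.sum_comm]
    rw [Finset.sum_congr rfl fun y _ => Finset.sum_comm]
    rw [Finset.sum_comm]
    refine Finset.sum_congr rfl fun z _ => Finset.sum_congr rfl fun y _ =>
      Finset.sum_congr rfl fun x _ => ?_
    by_cases hx : x = (fun i => (if i = 0 then (z i).1 else (y i).1,
            if i = Fin.last n then (z i).2 else (y i).2))
    · have hmid : ∀ j, midLabel x j = midLabel y j := fun j => by
        simp [hx, midLabel, Fin.succ_ne_zero, Fin.castSucc_ne_last]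
      have hx0 : (x 0).1 = (z 0).1 := by simp [hx]
      have hxl : (x (Fin.last n)).2 = (z (Fin.last n)).2 := by simp [hx]
      have hxi : ∀ i, i ≠ 0 → (x i).1 = (y i).1 := fun i hi => by simp [hx, hi]
      have hxi' : ∀ i, i ≠ Fin.last n → (x i).2 = (y i).2 := fun i hi => by simp [hx, hi]
      rw [if_pos hx]
      have hc : ((x 0).1 = s.1 ∧ (x (Fin.last n)).2 = s.2 ∧ (y 0).1 = t.1 ∧
          (y (Fin.last n)).2 = t.2 ∧ (∀ i, i ≠ 0 → (x i).1 = (y i).1) ∧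
          (∀ i, i ≠ Fin.last n → (x i).2 = (y i).2)) ↔ (ends z = s ∧ ends y = t) := by
        rw [hx0, hxl]
        simp only [ends, Prod.ext_iff]
        tauto
      simp only [hc]
      congr 1
      simp only [netGlobalMeas, netGlobalState, lineMatrix, Matrix.of_apply, if_pos hx0,
        if_pos hxl, one_mul]
      congr 1
      exact Finset.prod_congr rfl fun j _ => by
        change M j (midLabel x j) (midLabel z j) = _
        rw [hmid]
    · rw [if_neg hx, ite_eq_right_iff]
      rintro ⟨-, -, -, -, ha, hb⟩
      by_cases hx0 : (x 0).1 = (z 0).1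
      · by_cases hxl : (x (Fin.last n)).2 = (z (Fin.last n)).2
        · refine absurd (funext fun i => Prod.ext ?_ ?_) hx
          · by_cases hi : i = 0
            · subst hi; simpa using hx0
            · simpa [hi] using ha i hi
          · by_cases hi : i = Fin.last n
            · subst hi; simpa using hxl
            · simpa [hi] using hb i hi
        · simp [netGlobalMeas, hxl]
      · simp [netGlobalMeas, hx0]
  rw [h1]
  simp [compress]

lemma compress_lineMatrix_update_meas_add
    (M : ∀ j : Fin n, Matrix (B j.castSucc × A j.succ) (B j.castSucc × A j.succ) ℂ)
    (X : ∀ i, Matrix (A i × B i) (A i × B i) ℂ) (k : Fin n)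
    (S T : Matrix (B k.castSucc × A k.succ) (B k.castSucc × A k.succ) ℂ) :
    compress ends (lineMatrix (Function.update M k (S + T)) X) =
      compress ends (lineMatrix (Function.update M k S) X) +
        compress ends (lineMatrix (Function.update M k T) X) := by
  ext s t
  simp only [compress, lineMatrix, Matrix.of_apply, Matrix.add_apply, ← Finset.sum_add_distrib]
  refine Finset.sum_congr rfl fun x _ => Finset.sum_congr rfl fun y _ => ?_
  rw [prod_update_apply, prod_update_apply, prod_update_apply]
  split_ifs
  · rw [Matrix.add_apply]; ring
  · simp

lemma compress_lineMatrix_update_source_add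
    (M : ∀ j : Fin n, Matrix (B j.castSucc × A j.succ) (B j.castSucc × A j.succ) ℂ)
    (X : ∀ i, Matrix (A i × B i) (A i × B i) ℂ) (k : Fin (n + 1))
    (S T : Matrix (A k × B k) (A k × B k) ℂ) :
    compress ends (lineMatrix M (Function.update X k (S + T))) =
      compress ends (lineMatrix M (Function.update X k S)) +
        compress ends (lineMatrix M (Function.update X k T)) := by
  ext s t
  simp only [compress, lineMatrix, Matrix.of_apply, Matrix.add_apply, ← Finset.sum_add_distrib]
  refine Finset.sum_congr rfl fun x _ => Finset.sum_congr rfl fun y _ => ?_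
  rw [prod_update_apply, prod_update_apply, prod_update_apply]
  split_ifs
  · rw [Matrix.add_apply]; ring
  · simp

/-! ### A separable factor cuts the line -/

/-- A measurement operator that is a product cuts the line between its two systems. -/
lemma compress_mem_sepCone_of_meas
    (M : ∀ j : Fin n, Matrix (B j.castSucc × A j.succ) (B j.castSucc × A j.succ) ℂ)
    (X : ∀ i, Matrix (A i × B i) (A i × B i) ℂ)
    (hM : ∀ j, (M j).PosSemidef) (hX : ∀ i, (X i).PosSemidef) (k : Fin n)
    {P : Matrix (B k.castSucc) (B k.castSucc) ℂ} {Q : Matrix (A k.succ) (A k.succ) ℂ}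
    (hP : P.PosSemidef) (hQ : Q.PosSemidef) :
    compress ends (lineMatrix (Function.update M k (P ⊗ₖ Q)) X) ∈
      sepCone (A 0) (B (Fin.last n)) := by
  have hL := ((hP.transpose.submatrix fun x : ∀ i, A i × B i => (x k.castSucc).2).hadamard
    (posSemidef_prod_meas hM (Finset.univ.filter (· < k)))).hadamard (posSemidef_prod_source hX (Finset.univ.filter (· ≤ k.castSucc)))
  have hR := ((hQ.transpose.submatrix fun x : ∀ i, A i × B i => (x k.succ).1).hadamard
    (posSemidef_prod_meas hM (Finset.univ.filter (k < ·)))).hadamard (posSemidef_prod_source hX (Finset.univ.filter (¬ · ≤ k.castSucc)))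
  have key := compress_hadamard_mem_sepCone
    (mix (fun i => i ≤ k.castSucc) (fun i => i ≤ k.castSucc)) (mix_mix _ _)
    (fun x => (x 0).1) (fun x => (x (Fin.last n)).2) ?_ ?_ hL hR ?_ ?_
  · convert key using 1
    change compress ends _ = compress ends _
    congr 1
    ext x y
    simp only [lineMatrix, Matrix.of_apply, Matrix.hadamard_apply, Matrix.submatrix_apply,
      Matrix.transpose_apply]
    rw [prod_update_apply, ← Finset.prod_filter_mul_prod_filter_not Finset.univ
      (· ≤ k.castSucc) (fun i => X i (x i) (y i)),
      ← Finset.prod_filter_mul_prod_filter_not (Finset.univ.erase k) (· < k)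
      (fun j => M j (midLabel y j) (midLabel x j))]
    have e1 : (Finset.univ.erase k).filter (· < k) = Finset.univ.filter (· < k) := by
      ext j
      simpa using fun h => ne_of_lt h
    have e2 : (Finset.univ.erase k).filter (¬ · < k) = Finset.univ.filter (k < ·) := by
      ext j
      simp only [Finset.mem_filter, Finset.mem_erase, Finset.mem_univ, and_true, true_and, not_lt]
      rw [lt_iff_le_and_ne, and_comm, ne_comm]
    rw [e1, e2]
    simp only [Matrix.kroneckerMap_apply, midLabel]
    ring
  · intro x x'
    simp [mix]
  · intro x x'
    simp [mix, Fin.castSucc_ne_last]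
  · intro x x' y y'
    simp only [Matrix.hadamard_apply, Matrix.submatrix_apply, Matrix.transpose_apply,
      Matrix.of_apply]
    congr 1
    · congr 1
      · simp [mix]
      · refine Finset.prod_congr rfl fun j hj => ?_
        have hj' : j < k := by simpa using hj
        have h1 : j.castSucc ≤ k.castSucc := by simpa using hj'.le
        have h2 : j.succ ≤ k.castSucc := by
          rw [Fin.le_def]; simpa [Nat.succ_le_iff] using hj'
        simp [mix, midLabel, h1, h2, -Fin.castSucc_le_castSucc_iff]
    · refine Finset.prod_congr rfl fun i hi => ?_
      have hik : i ≤ k.castSucc := by simpa using hi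
      simp [mix, hik]
  · intro x x' y y'
    simp only [Matrix.hadamard_apply, Matrix.submatrix_apply, Matrix.transpose_apply,
      Matrix.of_apply]
    congr 1
    · congr 1
      · simp [mix]
      · refine Finset.prod_congr rfl fun j hj => ?_
        have hj' : k < j := by simpa using hj
        have h1 : ¬ j.castSucc ≤ k.castSucc := by simpa using hj'
        have h2 : ¬ j.succ ≤ k.castSucc := by
          rw [Fin.le_def, Fin.val_succ, Fin.val_castSucc]; rw [Fin.lt_def] at hj'; omega
        simp [mix, midLabel, h1, h2, -Fin.castSucc_le_castSucc_iff]
    · refine Finset.prod_congr rfl fun i hi => ?_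
      have hik : ¬ i ≤ k.castSucc := by simpa using hi
      simp [mix, hik]

/-- A source that is a product operator cuts the line between its two systems. -/
lemma compress_mem_sepCone_of_source
    (M : ∀ j : Fin n, Matrix (B j.castSucc × A j.succ) (B j.castSucc × A j.succ) ℂ)
    (X : ∀ i, Matrix (A i × B i) (A i × B i) ℂ)
    (hM : ∀ j, (M j).PosSemidef) (hX : ∀ i, (X i).PosSemidef) (k : Fin (n + 1))
    {P : Matrix (A k) (A k) ℂ} {Q : Matrix (B k) (B k) ℂ}
    (hP : P.PosSemidef) (hQ : Q.PosSemidef) :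
    compress ends (lineMatrix M (Function.update X k (P ⊗ₖ Q))) ∈
      sepCone (A 0) (B (Fin.last n)) := by
  have hL := ((hP.submatrix fun x : ∀ i, A i × B i => (x k).1).hadamard
    (posSemidef_prod_meas hM (Finset.univ.filter (fun j => j.castSucc < k)))).hadamard
      (posSemidef_prod_source hX (Finset.univ.filter (· < k)))
  have hR := ((hQ.submatrix fun x : ∀ i, A i × B i => (x k).2).hadamard
    (posSemidef_prod_meas hM (Finset.univ.filter (fun j => ¬ j.castSucc < k)))).hadamard
      (posSemidef_prod_source hX (Finset.univ.filter (k < ·)))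
  have key := compress_hadamard_mem_sepCone
    (mix (fun i => i ≤ k) (fun i => i < k)) (mix_mix _ _)
    (fun x => (x 0).1) (fun x => (x (Fin.last n)).2) ?_ ?_ hL hR ?_ ?_
  · convert key using 1
    change compress ends _ = compress ends _
    congr 1
    ext x y
    simp only [lineMatrix, Matrix.of_apply, Matrix.hadamard_apply, Matrix.submatrix_apply]
    rw [prod_update_apply, ← Finset.prod_filter_mul_prod_filter_not Finset.univ
      (fun j : Fin n => j.castSucc < k) (fun j => M j (midLabel y j) (midLabel x j)),
      ← Finset.prod_filter_mul_prod_filter_not (Finset.univ.erase k) (· < k)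
      (fun i => X i (x i) (y i))]
    have e1 : (Finset.univ.erase k).filter (· < k) = Finset.univ.filter (· < k) := by
      ext j
      simpa using fun h => ne_of_lt h
    have e2 : (Finset.univ.erase k).filter (¬ · < k) = Finset.univ.filter (k < ·) := by
      ext j
      simp only [Finset.mem_filter, Finset.mem_erase, Finset.mem_univ, and_true, true_and, not_lt]
      rw [lt_iff_le_and_ne, and_comm, ne_comm]
    rw [e1, e2]
    simp only [Matrix.kroneckerMap_apply]
    ring
  · intro x x'
    simp [mix]
  · intro x x'
    simp [mix, Fin.le_last]
  · intro x x' y y'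
    simp only [Matrix.hadamard_apply, Matrix.submatrix_apply, Matrix.of_apply]
    congr 1
    · congr 1
      · simp [mix]
      · refine Finset.prod_congr rfl fun j hj => ?_
        have h1 : j.castSucc < k := by simpa using hj
        have h2 : j.succ ≤ k := by simpa [Fin.le_def, Fin.lt_def, Nat.succ_le_iff] using h1
        simp [mix, midLabel, h1, h2]
    · refine Finset.prod_congr rfl fun i hi => ?_
      have hik : i < k := by simpa using hi
      simp [mix, hik, hik.le]
  · intro x x' y y'
    simp only [Matrix.hadamard_apply, Matrix.submatrix_apply, Matrix.of_apply]
    congr 1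
    · congr 1
      · simp [mix]
      · refine Finset.prod_congr rfl fun j hj => ?_
        have h1 : ¬ j.castSucc < k := by simpa using hj
        have h2 : ¬ j.succ ≤ k := by
          simp [Fin.le_def, Fin.lt_def] at h1 ⊢; omega
        simp [mix, midLabel, h1, h2]
    · refine Finset.prod_congr rfl fun i hi => ?_
      have hik : k < i := by simpa using hi
      simp [mix, hik.not_ge, hik.not_gt]

lemma compress_mem_sepCone_of_mem_meas
    (M : ∀ j : Fin n, Matrix (B j.castSucc × A j.succ) (B j.castSucc × A j.succ) ℂ)
    (X : ∀ i, Matrix (A i × B i) (A i × B i) ℂ)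
    (hM : ∀ j, (M j).PosSemidef) (hX : ∀ i, (X i).PosSemidef) (k : Fin n)
    {S : Matrix (B k.castSucc × A k.succ) (B k.castSucc × A k.succ) ℂ}
    (hS : S ∈ sepCone (B k.castSucc) (A k.succ)) :
    compress ends (lineMatrix (Function.update M k S) X) ∈ sepCone (A 0) (B (Fin.last n)) := by
  induction hS using AddSubmonoid.closure_induction with
  | mem S hS =>
    obtain ⟨P, Q, hP, hQ, rfl⟩ := hS
    exact compress_mem_sepCone_of_meas M X hM hX k hP hQ
  | zero =>
    rw [← Matrix.zero_kronecker (0 : Matrix (A k.succ) (A k.succ) ℂ)]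
    exact compress_mem_sepCone_of_meas M X hM hX k .zero .zero
  | add S T _ _ hS hT =>
    rw [compress_lineMatrix_update_meas_add]
    exact add_mem hS hT

lemma compress_mem_sepCone_of_mem_source
    (M : ∀ j : Fin n, Matrix (B j.castSucc × A j.succ) (B j.castSucc × A j.succ) ℂ)
    (X : ∀ i, Matrix (A i × B i) (A i × B i) ℂ)
    (hM : ∀ j, (M j).PosSemidef) (hX : ∀ i, (X i).PosSemidef) (k : Fin (n + 1))
    {S : Matrix (A k × B k) (A k × B k) ℂ} (hS : S ∈ sepCone (A k) (B k)) :
    compress ends (lineMatrix M (Function.update X k S)) ∈ sepCone (A 0) (B (Fin.last n)) := by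
  induction hS using AddSubmonoid.closure_induction with
  | mem S hS =>
    obtain ⟨P, Q, hP, hQ, rfl⟩ := hS
    exact compress_mem_sepCone_of_source M X hM hX k hP hQ
  | zero =>
    rw [← Matrix.zero_kronecker (0 : Matrix (B k) (B k) ℂ)]
    exact compress_mem_sepCone_of_source M X hM hX k .zero .zero
  | add S T _ _ hS hT =>
    rw [compress_lineMatrix_update_source_add]
    exact add_mem hS hT

/-! ### Expansion of the endpoint operator -/

/-- The cone of positive semidefinite matrices. -/
def psdCone (K : Type*) : AddSubmonoid (Matrix K K ℂ) where
  carrier := {R | R.PosSemidef}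
  zero_mem' := .zero
  add_mem' hR hS := hR.add hS

/-- The endpoint operator differs by a separable operator from the one in which every
measurement and every source is replaced by its non-free part. -/
lemma exists_sepCone_add
    (S N : ∀ j : Fin n, Matrix (B j.castSucc × A j.succ) (B j.castSucc × A j.succ) ℂ)
    (T E : ∀ i, Matrix (A i × B i) (A i × B i) ℂ)
    (hS : ∀ j, S j ∈ sepCone (B j.castSucc) (A j.succ)) (hN : ∀ j, (N j).PosSemidef)
    (hT : ∀ i, T i ∈ sepCone (A i) (B i)) (hE : ∀ i, (E i).PosSemidef) :
    ∃ c ∈ sepCone (A 0) (B (Fin.last n)),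
      compress ends (lineMatrix (fun j => S j + N j) (fun i => T i + E i)) =
        c + compress ends (lineMatrix N E) := by
  obtain ⟨c, hc, h⟩ := exists_mem_add_of_multiadditive
    (fun M => compress ends (lineMatrix M fun i => T i + E i)) (sepCone (A 0) (B (Fin.last n)))
    (fun j => psdCone _) (fun M k S T => compress_lineMatrix_update_meas_add M _ k S T) S N
    (fun j => posSemidef_of_mem_sepCone (hS j)) hN
    (fun M k hM => compress_mem_sepCone_of_mem_meas M _ hM
      (fun i => (posSemidef_of_mem_sepCone (hT i)).add (hE i)) k (hS k))
  obtain ⟨d, hd, h'⟩ := exists_mem_add_of_multiadditive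
    (fun X => compress ends (lineMatrix N X)) (sepCone (A 0) (B (Fin.last n)))
    (fun i => psdCone _) (fun X k S T => compress_lineMatrix_update_source_add N X k S T) T E
    (fun i => posSemidef_of_mem_sepCone (hT i)) hE
    (fun X k hX => compress_mem_sepCone_of_mem_source N X hN hX k (hT k))
  exact ⟨c + d, add_mem hc hd, by rw [h, h', add_assoc]⟩

lemma compress_lineMatrix_smul
    (N : ∀ j : Fin n, Matrix (B j.castSucc × A j.succ) (B j.castSucc × A j.succ) ℂ)
    (E : ∀ i, Matrix (A i × B i) (A i × B i) ℂ) (v : Fin n → ℝ) (w : Fin (n + 1) → ℝ) :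
    compress ends (lineMatrix (fun j => v j • N j) (fun i => w i • E i)) =
      ((∏ j, v j) * ∏ i, w i) • compress ends (lineMatrix N E) := by
  ext s t
  simp only [compress, lineMatrix, Matrix.of_apply, Matrix.smul_apply, Finset.smul_sum,
    Complex.real_smul, Finset.prod_mul_distrib]
  refine Finset.sum_congr rfl fun x _ => Finset.sum_congr rfl fun y _ => ?_
  split_ifs
  · push_cast; ring
  · simp

/-- Summed over all outcomes, the endpoint operators have total trace one: the measurements add up
to the identity, which identifies the two global indices. -/
lemma sum_trace_compress_lineMatrix {O : Fin n → Type*} [∀ j, Fintype (O j)]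
    (N : ∀ j : Fin n, O j → Matrix (B j.castSucc × A j.succ) (B j.castSucc × A j.succ) ℂ)
    (hN : ∀ j, IsPOVM (N j))
    (E : ∀ i, Matrix (A i × B i) (A i × B i) ℂ) (hE : ∀ i, IsState (E i)) :
    ∑ β : ∀ j, O j, (compress ends (lineMatrix (fun j => N j (β j)) E)).trace = 1 := by
  have htr : ∀ H : Matrix (∀ i, A i × B i) (∀ i, A i × B i) ℂ, (compress ends H).trace =
      ∑ x, ∑ y, if ends x = ends y then H x y else 0 := by
    intro H
    simp only [Matrix.trace, Matrix.diag_apply, compress, Matrix.of_apply]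
    rw [Finset.sum_comm]
    refine Finset.sum_congr rfl fun x _ => ?_
    rw [Finset.sum_comm]
    refine Finset.sum_congr rfl fun y _ => ?_
    simp only [ite_and, Finset.sum_ite_eq, Finset.mem_univ, if_true]
    simp only [eq_comm (a := ends y)]
  have hprod : ∀ x y : ∀ i, A i × B i, ∑ β : ∀ j, O j,
      ∏ j, N j (β j) (midLabel y j) (midLabel x j) =
        ∏ j, (1 : Matrix (B (Fin.castSucc j) × A j.succ) (B j.castSucc × A j.succ) ℂ)
          (midLabel y j) (midLabel x j) := by
    intro x y
    have := Finset.prod_univ_sum (fun j => (Finset.univ : Finset (O j)))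
      (fun j o => N j o (midLabel y j) (midLabel x j))
    rw [Fintype.piFinset_univ] at this
    rw [← this]
    refine Finset.prod_congr rfl fun j _ => ?_
    rw [← (hN j).2, Matrix.sum_apply]
  simp only [htr]
  rw [Finset.sum_comm]
  have hsum : ∀ x : ∀ i, A i × B i, (∑ β : ∀ j, O j, ∑ y, if ends x = ends y then
      lineMatrix (fun j => N j (β j)) E x y else 0) = ∏ i, E i (x i) (x i) := by
    intro x
    rw [Finset.sum_comm, Finset.sum_eq_single x]
    · simp only [if_true, lineMatrix, Matrix.of_apply]
      rw [← Finset.sum_mul, hprod]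
      simp
    · intro y _ hy
      by_cases he : ends x = ends y
      · simp only [if_pos he, lineMatrix, Matrix.of_apply]
        rw [← Finset.sum_mul, hprod]
        have : ∃ j : Fin n, midLabel y j ≠ midLabel x j := by
          by_contra! hall
          simp only [ends, Prod.ext_iff] at he
          refine hy (funext fun i => Prod.ext ?_ ?_)
          · refine Fin.cases he.1.symm (fun j => ?_) i
            exact congrArg Prod.snd (hall j)
          · refine Fin.lastCases he.2.symm (fun j => ?_) i
            exact congrArg Prod.fst (hall j)
        obtain ⟨j, hj⟩ := this
        have h0 : (1 : Matrix (B j.castSucc × A j.succ) (B j.castSucc × A j.succ) ℂ)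
            (midLabel y j) (midLabel x j) = 0 := Matrix.one_apply_ne hj
        exact mul_eq_zero_of_left (Finset.prod_eq_zero (Finset.mem_univ j) h0) _
      · simp [he]
    · simp
  simp only [hsum]
  have := Finset.prod_univ_sum (fun i => (Finset.univ : Finset (A i × B i)))
    (fun i z => E i z z)
  rw [Fintype.piFinset_univ] at this
  rw [← this]
  exact Finset.prod_eq_one fun i _ => (hE i).2

end Line

/-! ### Approximating the infima -/

lemma exists_isSepState {A B : Type*} [Fintype A] [Fintype B] [Nonempty A] [Nonempty B] :
    ∃ τ : Matrix (A × B) (A × B) ℂ, IsSepState τ := by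
  obtain ⟨α, hα⟩ := exists_isState (K := A)
  obtain ⟨β, hβ⟩ := exists_isState (K := B)
  exact ⟨_, .of_kronecker hα hβ⟩

lemma exists_isSepPOVM {A B ι : Type*} [Fintype A] [Fintype B] [Fintype ι] [DecidableEq A]
    [DecidableEq B] [Nonempty ι] : ∃ P : ι → Matrix (A × B) (A × B) ℂ, IsSepPOVM P := by
  classical
  obtain ⟨o⟩ := ‹Nonempty ι›
  refine ⟨fun i => if i = o then 1 else 0, ⟨fun i => ?_, by simp⟩, fun i => ?_⟩
  · dsimp only
    split_ifs
    exacts [.one, .zero]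
  · by_cases h : i = o
    · exact ⟨1, fun _ => 1, fun _ => 1, fun _ => .one, fun _ => .one, by simp [h]⟩
    · exact ⟨0, fun _ => 1, fun _ => 1, fun _ => .one, fun _ => .one, by simp [h]⟩

lemma IsSepPOVM.mem_sepCone {A B ι : Type*} [Fintype A] [Fintype B] [Fintype ι] [DecidableEq A]
    [DecidableEq B] {P : ι → Matrix (A × B) (A × B) ℂ} (h : IsSepPOVM P) (i : ι) :
    P i ∈ sepCone A B := by
  obtain ⟨m, P', Q', hP, hQ, h'⟩ := h.2 i
  rw [h']
  exact sum_mem fun a _ => kronecker_mem_sepCone (hP a) (hQ a)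

/-- An infimum of nonnegative numbers over a set containing `1` is a limit of members of the set
that are at most `1`. -/
lemma exists_seq_le_one {s : Set ℝ} (h1 : (1 : ℝ) ∈ s) (h0 : ∀ w ∈ s, 0 ≤ w) :
    ∃ u : ℕ → ℝ, Filter.Tendsto u Filter.atTop (nhds (sInf s)) ∧ ∀ k, u k ∈ s ∧ u k ≤ 1 := by
  have hb : BddBelow s := ⟨0, h0⟩
  obtain ⟨u, -, hu, hmem⟩ := exists_seq_tendsto_sInf ⟨1, h1⟩ hb
  refine ⟨fun k => min (u k) 1, ?_, fun k => ⟨?_, min_le_right _ _⟩⟩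
  · have := hu.min (tendsto_const_nhds (x := (1 : ℝ)))
    rwa [min_eq_left (csInf_le hb h1)] at this
  · dsimp only
    rcases min_choice (u k) 1 with h | h
    · rw [h]; exact hmem k
    · rw [h]; exact h1

/-- The bound for admissible decompositions of all devices with weights at most one. -/
lemma network_bound {n : ℕ} {A B : Fin (n + 1) → Type*}
    [∀ i, Fintype (A i)] [∀ i, Fintype (B i)]
    [∀ i, DecidableEq (A i)] [∀ i, DecidableEq (B i)] [∀ i, Nonempty (A i)] [∀ i, Nonempty (B i)]
    {O : Fin n → Type*} [∀ j, Fintype (O j)]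
    (M : ∀ j : Fin n, O j → Matrix (B j.castSucc × A j.succ) (B j.castSucc × A j.succ) ℂ)
    (ρ : ∀ i, Matrix (A i × B i) (A i × B i) ℂ)
    (v : Fin n → ℝ) (w : Fin (n + 1) → ℝ)
    (hv : ∀ j, 0 ≤ v j ∧ ∃ P : O j → _, IsSepPOVM P ∧ ∃ N, IsPOVM N ∧
      ∀ o, M j o = (1 - v j) • P o + v j • N o) (hv1 : ∀ j, v j ≤ 1)
    (hw : ∀ i, 0 ≤ w i ∧ ∃ τ, IsSepState τ ∧ ∃ η, IsState η ∧ ρ i = (1 - w i) • τ + w i • η)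
    (hw1 : ∀ i, w i ≤ 1) :
    ∑ β : ∀ j, O j,
      (if 0 < (netEndpoint (fun j => M j (β j)) ρ).trace.re then
        (netEndpoint (fun j => M j (β j)) ρ).trace.re *
          weight { σ : Matrix (A 0 × B (Fin.last n)) (A 0 × B (Fin.last n)) ℂ | IsSepState σ }
            ((((netEndpoint (fun j => M j (β j)) ρ).trace.re)⁻¹ : ℝ) •
              netEndpoint (fun j => M j (β j)) ρ)
      else 0) ≤ (∏ j, v j) * ∏ i, w i := by
  have hv0 := fun j => (hv j).1
  have hw0 := fun i => (hw i).1
  choose P hP N hN hM using fun j => (hv j).2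
  choose τ hτ η hη hρ using fun i => (hw i).2
  have hW : 0 ≤ (∏ j, v j) * ∏ i, w i :=
    mul_nonneg (Finset.prod_nonneg fun j _ => hv0 j) (Finset.prod_nonneg fun i _ => hw0 i)
  have hpsd : ∀ β : ∀ j, O j, (compress ends (lineMatrix (fun j => N j (β j)) η)).PosSemidef :=
    fun β => posSemidef_compress _
      (posSemidef_lineMatrix (fun j => (hN j).1 (β j)) (fun i => (hη i).1))
  have hterm : ∀ β : ∀ j, O j,
      (if 0 < (netEndpoint (fun j => M j (β j)) ρ).trace.re then
        (netEndpoint (fun j => M j (β j)) ρ).trace.re *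
          weight { σ : Matrix (A 0 × B (Fin.last n)) (A 0 × B (Fin.last n)) ℂ | IsSepState σ }
            ((((netEndpoint (fun j => M j (β j)) ρ).trace.re)⁻¹ : ℝ) •
              netEndpoint (fun j => M j (β j)) ρ)
      else 0) ≤ ((∏ j, v j) * ∏ i, w i) *
        (compress ends (lineMatrix (fun j => N j (β j)) η)).trace.re := by
    intro β
    split_ifs with ht
    · obtain ⟨S, hS, h⟩ := exists_sepCone_add (fun j => (1 - v j) • P j (β j))
        (fun j => v j • N j (β j)) (fun i => (1 - w i) • τ i) (fun i => w i • η i)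
        (fun j => smul_mem_sepCone (sub_nonneg.2 (hv1 j)) ((hP j).mem_sepCone _))
        (fun j => ((hN j).1 _).smul (hv0 j))
        (fun i => smul_mem_sepCone (sub_nonneg.2 (hw1 i)) (hτ i).mem_sepCone)
        (fun i => (hη i).1.smul (hw0 i))
      refine trace_mul_weight_le hW hS (hpsd β) ?_ ht
      rw [compress_lineMatrix_smul] at h
      rw [netEndpoint_eq, ← h]
      simp only [← hM, ← hρ]
    · exact mul_nonneg hW (Complex.nonneg_iff.1 (hpsd β).trace_nonneg).1
  refine (Finset.sum_le_sum fun β _ => hterm β).trans_eq ?_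
  rw [← Finset.mul_sum, ← Complex.re_sum, sum_trace_compress_lineMatrix N hN η hη]
  simp

/-- (Convex weight of the whole network.) The averaged convex weight of
the normalized endpoint states is bounded by the product of the separable convex weights of
all measurements and all source states of the line network. -/
theorem statement11 {n : ℕ} {A B : Fin (n + 1) → Type*}
    [∀ i, Fintype (A i)] [∀ i, Fintype (B i)]
    [∀ i, DecidableEq (A i)] [∀ i, DecidableEq (B i)]
    {O : Fin n → Type*} [∀ j, Fintype (O j)]
    (M : ∀ j : Fin n, O j → Matrix (B j.castSucc × A j.succ) (B j.castSucc × A j.succ) ℂ)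
    (hM : ∀ j, IsPOVM (M j))
    (ρ : ∀ i, Matrix (A i × B i) (A i × B i) ℂ) (hρ : ∀ i, IsState (ρ i)) :
    ∑ β : ∀ j, O j,
      (if 0 < (netEndpoint (fun j => M j (β j)) ρ).trace.re then
        (netEndpoint (fun j => M j (β j)) ρ).trace.re *
          weight { σ : Matrix (A 0 × B (Fin.last n)) (A 0 × B (Fin.last n)) ℂ | IsSepState σ }
            ((((netEndpoint (fun j => M j (β j)) ρ).trace.re)⁻¹ : ℝ) •
              netEndpoint (fun j => M j (β j)) ρ)
      else 0)
      ≤ (∏ j : Fin n, povmWeight { P : O j → _ | IsSepPOVM P } (M j)) *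
        (∏ i, weight { σ : Matrix (A i × B i) (A i × B i) ℂ | IsSepState σ } (ρ i)) := by
  have hne : ∀ i, Nonempty (A i × B i) := fun i => by
    by_contra h
    rw [not_nonempty_iff] at h
    simpa [Matrix.trace] using (hρ i).2
  have : ∀ i, Nonempty (A i) := fun i => (hne i).map Prod.fst
  have : ∀ i, Nonempty (B i) := fun i => (hne i).map Prod.snd
  have : ∀ j, Nonempty (O j) := fun j => by
    by_contra h
    rw [not_nonempty_iff] at h
    have h1 := (hM j).2
    rw [Finset.univ_eq_empty, Finset.sum_empty] at h1
    exact zero_ne_one h1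
  -- The trivial decompositions, with weight `1`, make the two sets of weights nonempty.
  have hv := fun j => exists_seq_le_one
    (s := { w : ℝ | 0 ≤ w ∧ ∃ P ∈ { P : O j → _ | IsSepPOVM P }, ∃ Nn, IsPOVM Nn ∧
      ∀ i, M j i = (1 - w) • P i + w • Nn i })
    (by
      obtain ⟨P, hP⟩ := exists_isSepPOVM (A := B j.castSucc) (B := A j.succ) (ι := O j)
      exact ⟨zero_le_one, P, hP, M j, hM j, fun i => by simp⟩)
    (fun w hw => hw.1)
  have hw := fun i => exists_seq_le_one
    (s := { w : ℝ | 0 ≤ w ∧ ∃ τ ∈ { σ : Matrix (A i × B i) (A i × B i) ℂ | IsSepState σ },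
      ∃ η, IsState η ∧ ρ i = (1 - w) • τ + w • η })
    (by
      obtain ⟨τ, hτ⟩ := exists_isSepState (A := A i) (B := B i)
      exact ⟨zero_le_one, τ, hτ, ρ i, hρ i, by simp⟩)
    (fun w hw => hw.1)
  choose v hvt hv using hv
  choose w hwt hw using hw
  have hlim := (tendsto_finsetProd Finset.univ fun j _ => hvt j).mul
    (tendsto_finsetProd Finset.univ fun i _ => hwt i)
  exact ge_of_tendsto' hlim fun k => network_bound M ρ (fun j => v j k) (fun i => w i k)
    (fun j => (hv j k).1) (fun j => (hv j k).2) (fun i => (hw i k).1) (fun i => (hw i k).2)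
end
end

section
/- (High-dimensional steering activation: Schmidt number of the induced ensemble.) Fix d ≥ 2 and an integer k with 2 ≤ k ≤ d, and let p ∈ [0,1] satisfy p² > (d(k−1)−1)/(d²−1). Then the state σ̂ = p² |ψ+_d⟩⟨ψ+_d| + (1−p²) 1_{d²}/d² on ℂ^d ⊗ ℂ^d has Schmidt number SN(σ̂) ≥ k. In particular, when two copies of the lossy isotropic state ρ_{p,q} with q > 0 are placed in a bilocality network with the Bell-projector measurement element, the normalized endpoint state for the corresponding outcome has Schmidt number at least k. -/
/-!
The fidelity with `|ψ+_d⟩` is a Schmidt number witness. The overlap of a unit vector `ψ` with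
`|ψ+_d⟩` is `tr M / √d`, where `M` is its coefficient matrix, and `|tr M|² ≤ rank M · ‖M‖²` for the
Frobenius norm (`normSq_trace_le`); so a mixture of vectors of Schmidt rank at most `k - 1` has
fidelity at most `(k - 1) / d` (`bellFidelity_le_schmidtRank`). The state `σ̂` has fidelity
`p² + (1 - p²) / d²`, which exceeds `(k - 1) / d` exactly under the hypothesis on `p`. As the
infimum of an empty set of naturals is `0`, the bound also needs a decomposition of `σ̂` to exist;
the mixture of `|ψ+_d⟩` with the product basis vectors is one (`le_SchmidtNumber_noisyMaxEnt`).

For the network, the Bell projector only sees the first `d` levels, where the lossy isotropic state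
is `q` times an isotropic state. A computation in coordinates (`activationEndpoint_eq`) shows that
the endpoint operator is `(q² / d²) σ̂`, whose normalization is `σ̂` itself.
-/

open scoped Kronecker ComplexOrder

noncomputable section

/-- The rank-one projector `|ψ⟩⟨ψ|` associated with a vector `ψ`. -/
def outerProj {n : Type*} (ψ : n → ℂ) : Matrix n n ℂ :=
  Matrix.vecMulVec ψ (star ψ)

/-- The maximally entangled unit vector `|ψ+_d⟩ = (1/√d) Σ_i |ii⟩` on `ℂ^d ⊗ ℂ^d`. -/
def psiPlus (d : ℕ) : Fin d × Fin d → ℂ :=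
  fun x => if x.1 = x.2 then (((Real.sqrt d : ℝ) : ℂ))⁻¹ else 0

/-- The Schmidt rank of a bipartite vector: the rank of its coefficient matrix. -/
def schmidtRank {A B : Type*} [Fintype A] [Fintype B] (ψ : A × B → ℂ) : ℕ :=
  (Matrix.of fun a b => ψ (a, b)).rank

/-- The Schmidt number of a bipartite state: the minimum over pure-state decompositions
of the maximal Schmidt rank of the members. -/
def SchmidtNumber {A B : Type*} [Fintype A] [Fintype B]
    (ρ : Matrix (A × B) (A × B) ℂ) : ℕ :=
  sInf { k | ∃ (m : ℕ) (p : Fin m → ℝ) (ψ : Fin m → (A × B → ℂ)),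
    (∀ l, 0 < p l) ∧ (∑ l, p l = 1) ∧ (∀ l, ∑ v, Complex.normSq (ψ l v) = 1) ∧
    ρ = (∑ l, p l • outerProj (ψ l)) ∧
    k = Finset.univ.sup fun l => schmidtRank (ψ l) }

/-- The noisy maximally entangled state `σ̂ = p²|ψ+_d⟩⟨ψ+_d| + (1−p²)1/d²`. -/
def noisyMaxEnt (d : ℕ) (p : ℝ) : Matrix (Fin d × Fin d) (Fin d × Fin d) ℂ :=
  p ^ 2 • outerProj (psiPlus d) +
    ((1 - p ^ 2) / (d : ℝ) ^ 2) • (1 : Matrix (Fin d × Fin d) (Fin d × Fin d) ℂ)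

/-- `|ψ+_d⟩` embedded in `ℂ^d ⊗ ℂ^{d+1}` (second factor in the first `d` levels). -/
def psiPlusEmb (d : ℕ) : Fin d × Fin (d + 1) → ℂ :=
  fun x => if (x.2 : ℕ) = (x.1 : ℕ) then (((Real.sqrt d : ℝ) : ℂ))⁻¹ else 0

/-- The identity `1_d` embedded in the first `d` levels of `ℂ^{d+1}`. -/
def idEmb (d : ℕ) : Matrix (Fin (d + 1)) (Fin (d + 1)) ℂ :=
  Matrix.of fun j j' => if j = j' ∧ (j : ℕ) < d then 1 else 0

/-- The projector `|∅⟩⟨∅|` onto the vacuum level of `ℂ^{d+1}`. -/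
def vacProj (d : ℕ) : Matrix (Fin (d + 1)) (Fin (d + 1)) ℂ :=
  Matrix.of fun j j' => if j = Fin.last d ∧ j' = Fin.last d then 1 else 0

/-- The lossy isotropic state on `ℂ^d ⊗ ℂ^{d+1}`. -/
def lossyIso (d : ℕ) (p q : ℝ) : Matrix (Fin d × Fin (d + 1)) (Fin d × Fin (d + 1)) ℂ :=
  (q * p) • outerProj (psiPlusEmb d) +
    (q * (1 - p) / (d : ℝ) ^ 2) • ((1 : Matrix (Fin d) (Fin d) ℂ) ⊗ₖ idEmb d) +
    ((1 - q) / (d : ℝ)) • ((1 : Matrix (Fin d) (Fin d) ℂ) ⊗ₖ vacProj d)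

/-- The embedded maximally entangled vector `(1/√d) Σ_{i<d} |ii⟩` on `ℂ^{d+1} ⊗ ℂ^{d+1}`. -/
def bellEmb (d : ℕ) : Fin (d + 1) × Fin (d + 1) → ℂ :=
  fun x => if x.1 = x.2 ∧ (x.1 : ℕ) < d then (((Real.sqrt d : ℝ) : ℂ))⁻¹ else 0

/-- Partial trace over the second tensor factor. -/
def ptraceSnd {A B : Type*} [Fintype B] (X : Matrix (A × B) (A × B) ℂ) : Matrix A A ℂ :=
  Matrix.of fun a a' => ∑ b, X (a, b) (a', b)

/-- Reordering `(A ⊗ C) ⊗ (B ⊗ B') → A ⊗ (B ⊗ B') ⊗ C`. -/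
def reorderMeas {A B B' C : Type*} : (A × C) × (B × B') → (A × (B × B')) × C :=
  fun x => ((x.1.1, x.2), x.1.2)

/-- Reordering `(A ⊗ C) ⊗ (B ⊗ B') → (A ⊗ B) ⊗ (B' ⊗ C)`. -/
def reorderState {A B B' C : Type*} : (A × C) × (B × B') → (A × B) × (B' × C) :=
  fun x => ((x.1.1, x.2.1), (x.2.2, x.1.2))

/-- The global operator `(1_A ⊗ B_b ⊗ 1_C)(ρ1 ⊗ ρ2)`, reordered to `(A×C)×(B×B')`. -/
def bilocGlobal {A B B' C : Type*} [Fintype A] [Fintype B] [Fintype B'] [Fintype C]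
    [DecidableEq A] [DecidableEq C]
    (ρ1 : Matrix (A × B) (A × B) ℂ) (ρ2 : Matrix (B' × C) (B' × C) ℂ)
    (Bb : Matrix (B × B') (B × B') ℂ) :
    Matrix ((A × C) × (B × B')) ((A × C) × (B × B')) ℂ :=
  ((((1 : Matrix A A ℂ) ⊗ₖ Bb) ⊗ₖ (1 : Matrix C C ℂ)).submatrix reorderMeas reorderMeas) *
    ((ρ1 ⊗ₖ ρ2).submatrix reorderState reorderState)

/-- The subnormalized endpoint state of two copies of the lossy isotropic state in a
bilocality network with the embedded Bell projector. -/
def activationEndpoint (d : ℕ) (p q : ℝ) : Matrix (Fin d × Fin d) (Fin d × Fin d) ℂ :=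
  ptraceSnd (bilocGlobal (lossyIso d p q)
    ((lossyIso d p q).submatrix Prod.swap Prod.swap) (outerProj (bellEmb d)))

/-! ### Trace and rank -/

/-- `|tr M|² ≤ rank M · ‖M‖²` in the Frobenius norm: expand every column of `M` in an orthonormal
basis of the range, which has `rank M` elements, and apply the Cauchy–Schwarz inequality. -/
theorem normSq_trace_le {d : ℕ} (M : Matrix (Fin d) (Fin d) ℂ) :
    Complex.normSq M.trace ≤ M.rank * ∑ i, ∑ j, Complex.normSq (M i j) := by
  set R := LinearMap.range (Matrix.toEuclideanLin M) with hR
  have hrank : M.rank = Module.finrank ℂ R := by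
    rw [hR, Matrix.toEuclideanLin_eq_toLin_orthonormal]
    exact Matrix.rank_eq_finrank_range_toLin M _ _
  let b := stdOrthonormalBasis ℂ R
  let col : Fin d → R := fun i => ⟨Matrix.toEuclideanLin M (EuclideanSpace.single i 1),
    LinearMap.mem_range_self _ _⟩
  have hcol : ∀ i j, (col i : EuclideanSpace ℂ (Fin d)) j = M j i := by
    intro i j
    simp [col, Matrix.toLpLin_apply]
  have hnorm : ∀ i, ∑ j, ‖inner ℂ (b j) (col i)‖ ^ 2 = ∑ j, Complex.normSq (M j i) := by
    intro i
    rw [b.sum_sq_norm_inner_right, Submodule.coe_norm, EuclideanSpace.norm_sq_eq]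
    simp only [hcol, Complex.normSq_eq_norm_sq]
  have htr : M.trace = ∑ i, ∑ j, (b j : EuclideanSpace ℂ (Fin d)) i * inner ℂ (b j) (col i) := by
    unfold Matrix.trace
    refine Finset.sum_congr rfl fun i _ => ?_
    rw [Matrix.diag_apply, ← hcol i i]
    conv_lhs => rw [← b.sum_repr' (col i)]
    simp [mul_comm]
  have hb : ∑ i, ∑ j, ‖(b j : EuclideanSpace ℂ (Fin d)) i‖ ^ 2 = (M.rank : ℝ) := by
    rw [Finset.sum_comm, hrank]
    simp_rw [← EuclideanSpace.norm_sq_eq, ← Submodule.coe_norm, b.norm_eq_one]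
    simp
  rw [Complex.normSq_eq_norm_sq, htr]
  simp only [← Fintype.sum_prod_type'] at *
  calc _ ≤ (∑ x : Fin d × Fin (Module.finrank ℂ R),
        ‖(b x.2 : EuclideanSpace ℂ (Fin d)) x.1‖ * ‖inner ℂ (b x.2) (col x.1)‖) ^ 2 := by
        gcongr
        refine (norm_sum_le _ _).trans_eq ?_
        simp only [norm_mul]
    _ ≤ _ := Finset.sum_mul_sq_le_sq_mul_sq _ _ _
    _ = _ := by
        rw [hb]
        congr 1
        rw [Fintype.sum_prod_type, Finset.sum_congr rfl fun i _ => hnorm i, Finset.sum_comm,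
          Fintype.sum_prod_type]

/-! ### Fidelity with the maximally entangled vector -/

/-- The fidelity `⟨ψ+|ρ|ψ+⟩` with the maximally entangled vector. -/
def bellFidelity (d : ℕ) (ρ : Matrix (Fin d × Fin d) (Fin d × Fin d) ℂ) : ℝ :=
  (star (psiPlus d) ⬝ᵥ ρ.mulVec (psiPlus d)).re

theorem sqrt_inv_mul (d : ℕ) :
    ((Real.sqrt d : ℝ) : ℂ)⁻¹ * ((Real.sqrt d : ℝ) : ℂ)⁻¹ = (d : ℂ)⁻¹ := by
  rw [← mul_inv, ← Complex.ofReal_mul, Real.mul_self_sqrt (by positivity)]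
  simp

theorem star_psiPlus (d : ℕ) : star (psiPlus d) = psiPlus d := by
  ext x
  simp only [Pi.star_apply, psiPlus]
  split_ifs <;> simp

theorem psiPlus_dot (d : ℕ) (ψ : Fin d × Fin d → ℂ) :
    psiPlus d ⬝ᵥ ψ = ((Real.sqrt d : ℝ) : ℂ)⁻¹ * ∑ i, ψ (i, i) := by
  simp [dotProduct, psiPlus, Fintype.sum_prod_type, Finset.mul_sum]

theorem psiPlus_dot_self (d : ℕ) (hd : d ≠ 0) : psiPlus d ⬝ᵥ psiPlus d = 1 := by
  rw [psiPlus_dot]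
  simp only [psiPlus, if_true, Finset.sum_const, Finset.card_univ, Fintype.card_fin, nsmul_eq_mul]
  rw [mul_left_comm, sqrt_inv_mul]
  exact mul_inv_cancel₀ (by exact_mod_cast hd)

theorem bellFidelity_add (d : ℕ) (ρ σ : Matrix (Fin d × Fin d) (Fin d × Fin d) ℂ) :
    bellFidelity d (ρ + σ) = bellFidelity d ρ + bellFidelity d σ := by
  simp [bellFidelity, Matrix.add_mulVec, dotProduct_add]

theorem bellFidelity_smul (d : ℕ) (r : ℝ) (ρ : Matrix (Fin d × Fin d) (Fin d × Fin d) ℂ) :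
    bellFidelity d (r • ρ) = r * bellFidelity d ρ := by
  simp [bellFidelity, Matrix.smul_mulVec, dotProduct_smul]

theorem bellFidelity_sum (d : ℕ) {ι : Type*} (s : Finset ι)
    (ρ : ι → Matrix (Fin d × Fin d) (Fin d × Fin d) ℂ) :
    bellFidelity d (∑ l ∈ s, ρ l) = ∑ l ∈ s, bellFidelity d (ρ l) := by
  classical
  induction s using Finset.induction_on with
  | empty => simp [bellFidelity]
  | insert a s ha ih => rw [Finset.sum_insert ha, Finset.sum_insert ha, bellFidelity_add, ih]

theorem bellFidelity_outerProj (d : ℕ) (ψ : Fin d × Fin d → ℂ) :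
    bellFidelity d (outerProj ψ) = Complex.normSq (psiPlus d ⬝ᵥ ψ) := by
  have h : star ψ ⬝ᵥ psiPlus d = star (psiPlus d ⬝ᵥ ψ) := by
    rw [← Matrix.star_dotProduct_star, star_psiPlus]
  rw [bellFidelity, outerProj, Matrix.vecMulVec_mulVec, dotProduct_smul, star_psiPlus, h]
  simp [Complex.normSq_apply]

theorem bellFidelity_one (d : ℕ) (hd : d ≠ 0) : bellFidelity d 1 = 1 := by
  simp [bellFidelity, star_psiPlus, psiPlus_dot_self d hd]

/-- A unit vector of Schmidt rank `r` has overlap at most `r / d` with `|ψ+_d⟩`. -/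
theorem bellFidelity_le_schmidtRank (d : ℕ) (ψ : Fin d × Fin d → ℂ)
    (hψ : ∑ v, Complex.normSq (ψ v) = 1) :
    bellFidelity d (outerProj ψ) ≤ schmidtRank ψ / d := by
  have h := normSq_trace_le (Matrix.of fun a b => ψ (a, b))
  simp only [Matrix.of_apply] at h
  rw [← Fintype.sum_prod_type' (f := fun a b => Complex.normSq (ψ (a, b))), hψ, mul_one] at h
  have hd : Complex.normSq (((Real.sqrt d : ℝ) : ℂ)⁻¹) = (d : ℝ)⁻¹ := by
    rw [map_inv₀, Complex.normSq_ofReal, Real.mul_self_sqrt (by positivity)]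
  rw [bellFidelity_outerProj, psiPlus_dot, Complex.normSq_mul, hd, div_eq_inv_mul]
  gcongr
  exact h

theorem bellFidelity_noisyMaxEnt (d : ℕ) (hd : d ≠ 0) (p : ℝ) :
    bellFidelity d (noisyMaxEnt d p) = p ^ 2 + (1 - p ^ 2) / (d : ℝ) ^ 2 := by
  rw [noisyMaxEnt, bellFidelity_add, bellFidelity_smul, bellFidelity_smul, bellFidelity_one d hd,
    bellFidelity_outerProj, psiPlus_dot_self d hd]
  simp

/-! ### Schmidt number bounds -/

/-- A lower bound `k` on the maximal Schmidt rank of every decomposition bounds the Schmidt number,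
provided that some decomposition exists; this proviso is needed since `sInf ∅ = 0` in `ℕ`. The
witness `(w, φ)` may have zero weights, which are discarded, and any finite index type. -/
theorem le_SchmidtNumber {A B ι : Type*} [Fintype A] [Fintype B] [Fintype ι]
    {ρ : Matrix (A × B) (A × B) ℂ} {k : ℕ}
    (w : ι → ℝ) (φ : ι → A × B → ℂ) (hw : ∀ l, 0 ≤ w l) (hw1 : ∑ l, w l = 1)
    (hφ : ∀ l, ∑ v, Complex.normSq (φ l v) = 1) (hρ : ρ = ∑ l, w l • outerProj (φ l))
    (hk : ∀ (m : ℕ) (p : Fin m → ℝ) (ψ : Fin m → (A × B → ℂ)),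
      (∀ l, 0 < p l) → (∑ l, p l = 1) → (∀ l, ∑ v, Complex.normSq (ψ l v) = 1) →
      ρ = (∑ l, p l • outerProj (ψ l)) → k ≤ Finset.univ.sup fun l => schmidtRank (ψ l)) :
    k ≤ SchmidtNumber ρ := by
  classical
  unfold SchmidtNumber
  refine le_csInf ?_ ?_
  · let e := (Fintype.equivFin {l // 0 < w l}).symm
    refine ⟨_, _, fun l => w (e l), fun l => φ (e l), fun l => (e l).2, ?_, fun l => hφ _, ?_, rfl⟩
    · rw [e.sum_comp (fun l => w l), ← hw1]
      rw [← Finset.sum_subtype (Finset.univ.filter fun l => 0 < w l) (by simp)]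
      refine Finset.sum_subset (Finset.subset_univ _) fun l _ hl => ?_
      exact le_antisymm (by simpa using hl) (hw l)
    · rw [e.sum_comp (fun l => w l • outerProj (φ l)), hρ]
      rw [← Finset.sum_subtype (Finset.univ.filter fun l => 0 < w l) (by simp)
        (fun l => w l • outerProj (φ l))]
      refine (Finset.sum_subset (Finset.subset_univ _) fun l _ hl => ?_).symm
      rw [le_antisymm (by simpa using hl) (hw l), zero_smul]
  · rintro n ⟨m, p, ψ, h0, h1, h2, h3, rfl⟩
    exact hk m p ψ h0 h1 h2 h3

/-- If all members of a decomposition had Schmidt rank at most `k - 1`, the fidelity would be at most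
`(k - 1) / d`, whereas `p² + (1 - p²) / d² > (k - 1) / d` is the hypothesis on `p`. -/
theorem le_SchmidtNumber_noisyMaxEnt (d : ℕ) (hd : 2 ≤ d) (k : ℕ)
    (p : ℝ) (hp : p ∈ Set.Icc (0 : ℝ) 1)
    (hp2 : ((d : ℝ) * ((k : ℝ) - 1) - 1) / ((d : ℝ) ^ 2 - 1) < p ^ 2) :
    k ≤ SchmidtNumber (noisyMaxEnt d p) := by
  have hd0 : d ≠ 0 := by omega
  have hdR : (2 : ℝ) ≤ d := by exact_mod_cast hd
  have hp1 : 0 ≤ 1 - p ^ 2 := by nlinarith [hp.1, hp.2]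
  -- The identity is decomposed along the product basis; the index `none` carries `|ψ+⟩`.
  refine le_SchmidtNumber (ι := Option (Fin d × Fin d))
    (fun o => o.elim (p ^ 2) fun _ => (1 - p ^ 2) / (d : ℝ) ^ 2)
    (fun o => o.elim (psiPlus d) fun v => Pi.single v 1) ?_ ?_ ?_ ?_ ?_
  · rintro (_ | _)
    · exact sq_nonneg p
    · exact div_nonneg hp1 (by positivity)
  · simp only [Fintype.sum_option, Option.elim, Finset.sum_const, Finset.card_univ,
      Fintype.card_prod, Fintype.card_fin, nsmul_eq_mul]
    push_cast
    field_simp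
    ring
  · rintro (_ | v)
    · have h := psiPlus_dot_self d hd0
      have h2 : ((∑ v, Complex.normSq (psiPlus d v) : ℝ) : ℂ) = 1 := by
        rw [← h, dotProduct]
        push_cast
        refine Finset.sum_congr rfl fun v _ => ?_
        rw [← Complex.mul_conj]
        congr 1
        exact congrFun (star_psiPlus d) v
      exact_mod_cast h2
    · simp only [Option.elim]
      rw [Finset.sum_eq_single v] <;> simp +contextual
  · simp only [Fintype.sum_option, Option.elim, noisyMaxEnt]
    rw [← Finset.smul_sum]
    congr 2
    ext x y
    rw [Matrix.sum_apply]
    simp [outerProj, Matrix.vecMulVec_apply, Pi.single_apply, Matrix.one_apply]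
  · intro m w ψ hw hw1 hψ hρ
    by_contra! hlt
    have hF := bellFidelity_noisyMaxEnt d hd0 p
    rw [hρ, bellFidelity_sum] at hF
    have hle : ∑ l, bellFidelity d (w l • outerProj (ψ l)) ≤ ∑ l, w l * (((k : ℝ) - 1) / d) := by
      refine Finset.sum_le_sum fun l _ => ?_
      rw [bellFidelity_smul]
      refine mul_le_mul_of_nonneg_left ?_ (hw l).le
      refine (bellFidelity_le_schmidtRank d _ (hψ l)).trans ?_
      gcongr
      have h1 : schmidtRank (ψ l) + 1 ≤ k :=
        (Finset.le_sup (f := fun l => schmidtRank (ψ l)) (Finset.mem_univ l)).trans_lt hlt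
      have h2 : (schmidtRank (ψ l) : ℝ) + 1 ≤ k := by exact_mod_cast h1
      linarith
    rw [hF, ← Finset.sum_mul, hw1, one_mul] at hle
    rw [div_lt_iff₀ (by nlinarith)] at hp2
    have h3 : p ^ 2 + (1 - p ^ 2) / (d : ℝ) ^ 2 = (p ^ 2 * ((d : ℝ) ^ 2 - 1) + 1) / (d : ℝ) ^ 2 := by
      field_simp
      ring
    rw [h3, div_le_div_iff₀ (by positivity) (by positivity)] at hle
    nlinarith

/-! ### The endpoint state of the bilocality network -/

/-- The operator `⟨φ|_{BB'} (ρ1 ⊗ ρ2) |φ⟩_{BB'}` written out in coordinates. -/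
theorem ptraceSnd_bilocGlobal {A B B' C : Type*} [Fintype A] [Fintype B] [Fintype B'] [Fintype C]
    [DecidableEq A] [DecidableEq C]
    (ρ1 : Matrix (A × B) (A × B) ℂ) (ρ2 : Matrix (B' × C) (B' × C) ℂ)
    (φ : B × B' → ℂ) (a a' : A) (c c' : C) :
    ptraceSnd (bilocGlobal ρ1 ρ2 (outerProj φ)) (a, c) (a', c') =
      ∑ x : B × B', φ x * ∑ y : B × B',
        star (φ y) * (ρ1 (a, y.1) (a', x.1) * ρ2 (y.2, c) (x.2, c')) := by
  simp only [ptraceSnd, bilocGlobal, Matrix.of_apply, Matrix.mul_apply]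
  refine Finset.sum_congr rfl fun x _ => ?_
  rw [Fintype.sum_prod_type, Finset.sum_eq_single (a, c)]
  · simp [reorderMeas, reorderState, outerProj, Matrix.vecMulVec_apply, Finset.mul_sum, mul_assoc]
  · rintro ⟨a₁, c₁⟩ _ hne
    refine Finset.sum_eq_zero fun y _ => ?_
    have : a ≠ a₁ ∨ c ≠ c₁ := by
      by_contra! h
      exact hne (by rw [h.1, h.2])
    rcases this with h | h <;> simp [reorderMeas, Matrix.one_apply, h]
  · simp

theorem sum_bellEmb (d : ℕ) (f : Fin (d + 1) × Fin (d + 1) → ℂ) :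
    ∑ x, bellEmb d x * f x =
      ((Real.sqrt d : ℝ) : ℂ)⁻¹ * ∑ i : Fin d, f (i.castSucc, i.castSucc) := by
  rw [Fintype.sum_prod_type, Fin.sum_univ_castSucc, Finset.mul_sum]
  have hlast : ∑ y, bellEmb d (Fin.last d, y) * f (Fin.last d, y) = 0 := by
    refine Finset.sum_eq_zero fun y _ => ?_
    simp [bellEmb]
  rw [hlast, add_zero]
  refine Finset.sum_congr rfl fun i _ => ?_
  rw [Finset.sum_eq_single i.castSucc]
  · simp [bellEmb]
  · intro y _ hy
    simp [bellEmb, hy.symm]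
  · simp

theorem star_bellEmb (d : ℕ) (x : Fin (d + 1) × Fin (d + 1)) :
    star (bellEmb d x) = bellEmb d x := by
  simp only [bellEmb]
  split_ifs <;> simp

/-- On the first `d` levels the vacuum term of the lossy isotropic state vanishes. -/
theorem lossyIso_castSucc (d : ℕ) (p q : ℝ) (a a' e b : Fin d) :
    lossyIso d p q (a, e.castSucc) (a', b.castSucc) =
      (q * p / d : ℂ) * ((if e = a then 1 else 0) * (if b = a' then 1 else 0)) +
      (q * (1 - p) / d ^ 2 : ℂ) * ((if a = a' then 1 else 0) * (if e = b then 1 else 0)) := by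
  have h1 : ∀ a e : Fin d, psiPlusEmb d (a, e.castSucc) =
      ((Real.sqrt d : ℝ) : ℂ)⁻¹ * (if e = a then 1 else 0) := by
    intro a e
    simp [psiPlusEmb, Fin.ext_iff]
  have h2 : outerProj (psiPlusEmb d) (a, e.castSucc) (a', b.castSucc) =
      (d : ℂ)⁻¹ * ((if e = a then 1 else 0) * (if b = a' then 1 else 0)) := by
    rw [outerProj, Matrix.vecMulVec_apply, Pi.star_apply, h1, h1, ← sqrt_inv_mul]
    split_ifs <;> simp
  have h3 : idEmb d e.castSucc b.castSucc = if e = b then 1 else 0 := by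
    simp [idEmb]
  have h4 : vacProj d e.castSucc b.castSucc = 0 := by
    simp [vacProj, Fin.castSucc_ne_last]
  simp only [lossyIso, Matrix.add_apply, Matrix.smul_apply, h2, Matrix.kroneckerMap_apply, h3, h4,
    Matrix.one_apply, Complex.real_smul]
  push_cast
  ring

/-- Entanglement swapping: the endpoint state is `σ̂` up to the outcome probability `q² / d²`. -/
theorem activationEndpoint_eq (d : ℕ) (hd : d ≠ 0) (p q : ℝ) :
    activationEndpoint d p q = (q ^ 2 / (d : ℝ) ^ 2) • noisyMaxEnt d p := by
  have hdC : (d : ℂ) ≠ 0 := by exact_mod_cast hd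
  ext ⟨a, c⟩ ⟨a', c'⟩
  have hψ : outerProj (psiPlus d) (a, c) (a', c') =
      (d : ℂ)⁻¹ * ((if a = c then 1 else 0) * (if a' = c' then 1 else 0)) := by
    rw [outerProj, Matrix.vecMulVec_apply, star_psiPlus, ← sqrt_inv_mul]
    simp only [psiPlus]
    split_ifs <;> simp
  have h1 : (1 : Matrix (Fin d × Fin d) (Fin d × Fin d) ℂ) (a, c) (a', c') =
      (if a = a' then 1 else 0) * (if c = c' then 1 else 0) := by
    simp only [Matrix.one_apply, Prod.mk.injEq]
    split_ifs <;> simp_all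
  rw [activationEndpoint, ptraceSnd_bilocGlobal]
  simp only [star_bellEmb, sum_bellEmb, Matrix.submatrix_apply, Prod.swap, lossyIso_castSucc]
  rw [← Finset.mul_sum, ← mul_assoc, sqrt_inv_mul]
  simp only [noisyMaxEnt, Matrix.smul_apply, Matrix.add_apply, hψ, h1, Complex.real_smul]
  -- The four terms of the product are summed separately.
  have hsum : ∀ s t : ℂ, (∑ b : Fin d, ∑ e : Fin d,
      (s * ((if e = a then 1 else 0) * (if b = a' then 1 else 0)) +
        t * ((if a = a' then 1 else 0) * (if e = b then 1 else 0))) *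
      (s * ((if e = c then 1 else 0) * (if b = c' then 1 else 0)) +
        t * ((if c = c' then 1 else 0) * (if e = b then 1 else 0)))) =
      s ^ 2 * ((if a = c then 1 else 0) * (if a' = c' then 1 else 0)) +
      (2 * s * t + d * t ^ 2) * ((if a = a' then 1 else 0) * (if c = c' then 1 else 0)) := by
    intro s t
    simp only [add_mul, mul_add, Finset.sum_add_distrib]
    simp [mul_ite, ite_mul]
    simp only [@eq_comm _ c' a', @eq_comm _ c a, @eq_comm _ a' a]
    split_ifs <;> ring
  rw [hsum]
  push_cast
  field_simp
  ring

theorem trace_noisyMaxEnt (d : ℕ) (hd : d ≠ 0) (p : ℝ) : (noisyMaxEnt d p).trace = 1 := by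
  have hdC : (d : ℂ) ≠ 0 := by exact_mod_cast hd
  rw [noisyMaxEnt, Matrix.trace_add, Matrix.trace_smul, Matrix.trace_smul, outerProj,
    Matrix.trace_vecMulVec, star_psiPlus, psiPlus_dot_self d hd, Matrix.trace_one]
  simp only [Complex.real_smul, Fintype.card_prod, Fintype.card_fin]
  push_cast
  field_simp
  ring

/-- (High-dimensional steering activation.) If
`p² > (d(k−1)−1)/(d²−1)` then `SN(σ̂) ≥ k`; in particular, for `q > 0` the normalized
endpoint state of the bilocality network has Schmidt number at least `k`. -/
theorem statement19 (d : ℕ) (hd : 2 ≤ d) (k : ℕ) (hk2 : 2 ≤ k) (hkd : k ≤ d)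
    (p : ℝ) (hp : p ∈ Set.Icc (0 : ℝ) 1)
    (hp2 : ((d : ℝ) * ((k : ℝ) - 1) - 1) / ((d : ℝ) ^ 2 - 1) < p ^ 2) :
    k ≤ SchmidtNumber (noisyMaxEnt d p) ∧
    ∀ q : ℝ, 0 < q → q ≤ 1 →
      k ≤ SchmidtNumber
        ((((activationEndpoint d p q).trace.re)⁻¹ : ℝ) • activationEndpoint d p q) := by
  refine ⟨le_SchmidtNumber_noisyMaxEnt d hd k p hp hp2, fun q hq _ => ?_⟩
  have hd0 : d ≠ 0 := by omega
  have hq0 : q ≠ 0 := hq.ne'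
  have hnormalized : (((activationEndpoint d p q).trace.re)⁻¹ : ℝ) • activationEndpoint d p q =
      noisyMaxEnt d p := by
    rw [activationEndpoint_eq d hd0, Matrix.trace_smul, trace_noisyMaxEnt d hd0, smul_smul]
    have hre : ((q ^ 2 / (d : ℝ) ^ 2) • (1 : ℂ)).re = q ^ 2 / (d : ℝ) ^ 2 := by
      rw [Complex.smul_re, Complex.one_re, smul_eq_mul, mul_one]
    rw [hre, inv_mul_cancel₀ (by positivity), one_smul]
  rw [hnormalized]
  exact le_SchmidtNumber_noisyMaxEnt d hd k p hp hp2
end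
end
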